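/- arXiv:1801.04466 — 4 statements merged into one kernel-verified Lean document; each statement's English description precedes it below -/
import Mathlib

section
/- Let n ≥ k ≥ 1, let Φ be an n×k real matrix with orthonormal columns (Φᵀ Φ = I_k), and let V be an invertible k×k real matrix. For each k-element subset S of {1,…,n} let G_S = (Φ_S V)ᵀ (Φ_S V), where Φ_S is the submatrix of rows of Φ indexed by S. Let N = C(n,k) be the number of such subsets. Then the geometric mean of the determinants satisfies (∏_S det G_S)^{1/N} ≤ det(Vᵀ V) / N. -/
open Matrix

/-- The `k × k` submatrix of `Φ` formed by the rows indexed by the `k`-element subset `S`. -/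
def rowsSub {n k : ℕ} (Φ : Matrix (Fin n) (Fin k) ℝ)
    (S : {s : Finset (Fin n) // s.card = k}) : Matrix (Fin k) (Fin k) ℝ :=
  fun i j => Φ ((S.1.orderIsoOfFin S.2 i : Fin n)) j

/-!
Apply AM–GM to the nonnegative numbers `det G_S`, whose sum is `det ((Φ V)ᵀ (Φ V))` by
Cauchy–Binet. For the latter, expand `det (A * B)` multilinearly in its rows: only injective choices
of indices survive, and each is an enumeration of its image `S` preceded by a permutation. The sum
over the permutations is the Leibniz formula for the minor of `A` on the columns `S`.
-/

lemma bijective_perm_trans_enum {ι κ : Type*} [Fintype κ] {k : ℕ} (hκ : Fintype.card κ = k)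
    (e : ∀ S : {s : Finset ι // s.card = k}, κ ≃ S.1) :
    Function.Bijective fun p : {s : Finset ι // s.card = k} × Equiv.Perm κ =>
      (p.2.trans (e p.1)).toEmbedding.trans (.subtype _) := by
  refine ⟨?_, fun f => ?_⟩
  · have range_enum (S : {s : Finset ι // s.card = k}) (σ : Equiv.Perm κ) :
        Set.range (fun i => (e S (σ i) : ι)) = S.1 :=
      ((σ.trans (e S)).surjective.range_comp Subtype.val).trans Subtype.range_coe
    rintro ⟨S, σ⟩ ⟨T, τ⟩ h
    have enum_eq : (fun i => (e S (σ i) : ι)) = fun i => (e T (τ i) : ι) := congrArg (⇑) h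
    obtain rfl : S = T := Subtype.ext <| Finset.coe_injective <| by
      rw [← range_enum S σ, enum_eq, range_enum T τ]
    obtain rfl : σ = τ :=
      Equiv.ext fun i => (e S).injective (Subtype.ext (congrFun enum_eq i))
    rfl
  · let S : {s : Finset ι // s.card = k} :=
      ⟨Finset.univ.map f, (Finset.card_map f).trans hκ⟩
    let f_onto_S : κ ≃ S.1 :=
      (Equiv.subtypeUnivEquiv Finset.mem_univ).symm.trans (Finset.univ.equivMap f)
    refine ⟨(S, f_onto_S.trans (e S).symm), Function.Embedding.ext fun i => ?_⟩
    exact congrArg Subtype.val ((e S).apply_symm_apply (f_onto_S i))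

lemma det_submatrix_eq_zero_of_not_injective {ι κ R : Type*} [Fintype κ] [DecidableEq κ]
    [CommRing R] (B : Matrix ι κ R) {f : κ → ι} (hf : ¬ Function.Injective f) :
    (B.submatrix f id).det = 0 := by
  obtain ⟨i, j, hij, hne⟩ := Function.not_injective_iff.mp hf
  exact det_zero_of_row_eq hne (congrArg B hij)

section CauchyBinet

variable {ι κ R : Type*} [Fintype ι] [Fintype κ] [DecidableEq κ] [CommRing R]

lemma det_mul_eq_sum_fun (A : Matrix κ ι R) (B : Matrix ι κ R) :
    (A * B).det = ∑ f : κ → ι, (∏ i, A i (f i)) * (B.submatrix f id).det := by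
  have rows_mul : A * B = fun i => ∑ a, A i a • B a := by
    ext i j
    simp only [mul_apply, Finset.sum_apply, Pi.smul_apply, smul_eq_mul]
  calc (A * B).det
      = (detRowAlternating (R := R)).toMultilinearMap fun i => ∑ a, A i a • B a :=
        congrArg det rows_mul
    _ = ∑ f : κ → ι,
          (detRowAlternating (R := R)).toMultilinearMap fun i => A i (f i) • B (f i) :=
        MultilinearMap.map_sum _ _
    _ = ∑ f : κ → ι, (∏ i, A i (f i)) * (B.submatrix f id).det :=
        Finset.sum_congr rfl fun f _ => MultilinearMap.map_smul_univ _ _ _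

lemma det_mul_eq_sum_embedding (A : Matrix κ ι R) (B : Matrix ι κ R) :
    (A * B).det = ∑ f : κ ↪ ι, (∏ i, A i (f i)) * (B.submatrix f id).det := by
  rw [det_mul_eq_sum_fun]
  refine (Finset.sum_of_injOn (fun f : κ ↪ ι => ⇑f) DFunLike.coe_injective.injOn
    (fun _ _ => Finset.mem_coe.mpr (Finset.mem_univ _)) (fun f _ hf => ?_) fun _ _ => rfl).symm
  have not_inj : ¬ Function.Injective f := fun inj => hf ⟨⟨f, inj⟩, by simp, rfl⟩
  rw [det_submatrix_eq_zero_of_not_injective B not_inj, mul_zero]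

theorem cauchy_binet {k : ℕ} (hκ : Fintype.card κ = k)
    (e : ∀ S : {s : Finset ι // s.card = k}, κ ≃ S.1) (A : Matrix κ ι R) (B : Matrix ι κ R) :
    (A * B).det = ∑ S, (A.submatrix id fun i => (e S i : ι)).det *
      (B.submatrix (fun i => (e S i : ι)) id).det := by
  have leibniz (S : {s : Finset ι // s.card = k}) :
      (A.submatrix id fun i => (e S i : ι)).det =
        ∑ σ : Equiv.Perm κ, (Equiv.Perm.sign σ : R) * ∏ i, A i (e S (σ i)) := by
    rw [← det_transpose, det_apply']
    rfl
  have permute (S : {s : Finset ι // s.card = k}) (σ : Equiv.Perm κ) :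
      (B.submatrix (fun i => (e S (σ i) : ι)) id).det =
        Equiv.Perm.sign σ * (B.submatrix (fun i => (e S i : ι)) id).det :=
    det_permute σ (B.submatrix (fun i => (e S i : ι)) id)
  calc (A * B).det
      = ∑ f : κ ↪ ι, (∏ i, A i (f i)) * (B.submatrix f id).det := det_mul_eq_sum_embedding A B
    _ = ∑ p : {s : Finset ι // s.card = k} × Equiv.Perm κ,
          (∏ i, A i (e p.1 (p.2 i))) * (B.submatrix (fun i => (e p.1 (p.2 i) : ι)) id).det :=
        ((bijective_perm_trans_enum hκ e).sum_comp
          fun f => (∏ i, A i (f i)) * (B.submatrix f id).det).symm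
    _ = ∑ S, ∑ σ : Equiv.Perm κ, (Equiv.Perm.sign σ : R) * (∏ i, A i (e S (σ i))) *
          (B.submatrix (fun i => (e S i : ι)) id).det := by
        rw [Fintype.sum_prod_type]
        simp only [permute, mul_left_comm, mul_assoc]
    _ = _ := by simp only [leibniz, Finset.sum_mul]

end CauchyBinet

lemma prod_rpow_one_div_card_le_sum_div_card {ι : Type*} [Fintype ι] [Nonempty ι] {z : ι → ℝ}
    (hz : ∀ i, 0 ≤ z i) :
    (∏ i, z i) ^ (1 / (Fintype.card ι : ℝ)) ≤ (∑ i, z i) / Fintype.card ι := by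
  simpa using Real.geom_mean_le_arith_mean Finset.univ (fun _ => 1) z
    (fun _ _ => zero_le_one) (by simp [Fintype.card_pos]) fun i _ => hz i

theorem geom_mean_det_gram_le_general {ι κ : Type*} [Fintype ι] [Fintype κ] [DecidableEq κ]
    {k : ℕ} (hκ : Fintype.card κ = k) (hk : k ≤ Fintype.card ι)
    (e : ∀ S : {s : Finset ι // s.card = k}, κ ≃ S.1) (A : Matrix ι κ ℝ) :
    (∏ S, ((A.submatrix (fun i => (e S i : ι)) id)ᵀ *
        A.submatrix (fun i => (e S i : ι)) id).det) ^ ((1 : ℝ) / ((Fintype.card ι).choose k : ℝ))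
      ≤ (Aᵀ * A).det / ((Fintype.card ι).choose k : ℝ) := by
  have card_subsets : Fintype.card {s : Finset ι // s.card = k} = (Fintype.card ι).choose k :=
    Fintype.card_finset_len k
  have : Nonempty {s : Finset ι // s.card = k} :=
    Fintype.card_pos_iff.mp (card_subsets ▸ Nat.choose_pos hk)
  have gram_nonneg (S) : 0 ≤ ((A.submatrix (fun i => (e S i : ι)) id)ᵀ *
      A.submatrix (fun i => (e S i : ι)) id).det := by
    rw [det_mul, det_transpose]
    exact mul_self_nonneg _
  have sum_gram : ∑ S, ((A.submatrix (fun i => (e S i : ι)) id)ᵀ *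
      A.submatrix (fun i => (e S i : ι)) id).det = (Aᵀ * A).det := by
    rw [cauchy_binet hκ e]
    exact Finset.sum_congr rfl fun S _ => det_mul _ _
  rw [← card_subsets, ← sum_gram]
  exact prod_rpow_one_div_card_le_sum_div_card gram_nonneg

lemma rowsSub_mul {n k : ℕ} (Φ : Matrix (Fin n) (Fin k) ℝ) (V : Matrix (Fin k) (Fin k) ℝ)
    (S : {s : Finset (Fin n) // s.card = k}) :
    rowsSub Φ S * V = (Φ * V).submatrix (fun i => (S.1.orderIsoOfFin S.2 i : Fin n)) id :=
  rfl

lemma gram_mul_of_gram_eq_one {ι κ μ R : Type*} [Fintype ι] [Fintype κ] [DecidableEq κ]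
    [CommSemiring R] {Φ : Matrix ι κ R} (hΦ : Φᵀ * Φ = 1) (V : Matrix κ μ R) :
    (Φ * V)ᵀ * (Φ * V) = Vᵀ * V := by
  rw [transpose_mul, Matrix.mul_assoc, ← Matrix.mul_assoc Φᵀ, hΦ, Matrix.one_mul]

/-- Determinant bound: the geometric mean of the Gram determinants of the child
lattices is at most `det (Vᵀ V) / C(n,k)`. -/
theorem geom_mean_det_gram_le (n k : ℕ) (hk : 1 ≤ k) (hkn : k ≤ n)
    (Φ : Matrix (Fin n) (Fin k) ℝ) (hΦ : Φᵀ * Φ = 1)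
    (V : Matrix (Fin k) (Fin k) ℝ) (hV : IsUnit V.det) :
    (∏ S : {s : Finset (Fin n) // s.card = k},
        ((rowsSub Φ S * V)ᵀ * (rowsSub Φ S * V)).det) ^ ((1 : ℝ) / (n.choose k : ℝ))
      ≤ (Vᵀ * V).det / (n.choose k : ℝ) := by
  simpa only [rowsSub_mul, gram_mul_of_gram_eq_one hΦ, Fintype.card_fin] using!
    geom_mean_det_gram_le_general (Fintype.card_fin k) (hkn.trans_eq (Fintype.card_fin n).symm)
      (fun S => (S.1.orderIsoOfFin S.2).toEquiv) (Φ * V)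
end

section
/- Let n ≥ k ≥ 1, let Φ be an n×k real matrix with orthonormal columns (Φᵀ Φ = I_k), and let V be an invertible k×k real matrix. For each k-element subset S of {1,…,n}, let r_S² = inf{ ‖Φ_S V u‖² : u ∈ ℤ^k, u ≠ 0 } and let r_V² = inf{ ‖V u‖² : u ∈ ℤ^k, u ≠ 0 }. Then there exists a k-element subset S of {1,…,n} with r_S² ≤ (k/n) · r_V². -/
/-!
For a fixed integer vector `u ≠ 0`, the coordinates of `ΦVu` have total square sum `‖Vu‖²`, because
`Φ` is an isometry. Each coordinate lies in the same proportion `k/n` of all `k`-subsets, so the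
average of `‖Φ_S V u‖²` over `S` is `(k/n) ‖Vu‖²`, and some `S` does at least as well. That `S`
depends on `u`, but there are finitely many subsets: the one minimising `r_S²` is good for every
`u`, and the infimum over `u` can then be taken without knowing that it is attained.
-/

open Matrix

/-- Squared Euclidean norm of a vector in `ℝ^k`. -/
def sqnorm {k : ℕ} (x : Fin k → ℝ) : ℝ := ∑ i, x i ^ 2

/-- The squared length of the shortest nonzero vector of the lattice `M ℤ^k`. -/
noncomputable def minSq {k : ℕ} (M : Matrix (Fin k) (Fin k) ℝ) : ℝ :=
  sInf {t : ℝ | ∃ u : Fin k → ℤ, u ≠ 0 ∧ t = sqnorm (M.mulVec fun j => (u j : ℝ))}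

/-- The squared length of a shortest integer combination of the columns of `A` with coefficients
not all zero. This extends `minSq` to rectangular matrices, so that it also applies to lattices of
lower rank than the ambient space; it is an infimum, attained when the columns are linearly
independent. -/
noncomputable def minSqLength {ι κ : Type*} [Fintype ι] [Fintype κ] (A : Matrix ι κ ℝ) : ℝ :=
  ⨅ u : {u : κ → ℤ // u ≠ 0},
    (A *ᵥ fun j => (u.1 j : ℝ)) ⬝ᵥ (A *ᵥ fun j => (u.1 j : ℝ))

section Averaging

variable {ι : Type*} {s : Finset ι} {m : ℕ}

theorem sum_powersetCard_sum {M : Type*} [AddCommMonoid M] (hm : m ≠ 0) (f : ι → M) :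
    ∑ t ∈ s.powersetCard m, ∑ i ∈ t, f i = (s.card - 1).choose (m - 1) • ∑ i ∈ s, f i := by
  classical
  have card_containing : ∀ i ∈ s,
      {t ∈ s.powersetCard m | i ∈ t}.card = (s.card - 1).choose (m - 1) := fun i hi => by
    simpa using Finset.card_filter_powersetCard_subset {i} s m (by simpa) (by simp; lia)
  calc ∑ t ∈ s.powersetCard m, ∑ i ∈ t, f i
      = ∑ i ∈ s, ∑ t ∈ s.powersetCard m with i ∈ t, f i :=
        Finset.sum_comm' fun t i => by
          simp only [Finset.mem_filter, Finset.mem_powersetCard]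
          exact ⟨fun h => ⟨h, h.1.1 h.2⟩, fun h => h.1⟩
    _ = (s.card - 1).choose (m - 1) • ∑ i ∈ s, f i := by
        rw [Finset.smul_sum]
        exact Finset.sum_congr rfl fun i hi => by rw [Finset.sum_const, card_containing i hi]

theorem exists_subset_card_eq_sum_le {K : Type*} [Field K] [LinearOrder K] [IsStrictOrderedRing K]
    (hm : m ≤ s.card) (w : ι → K) :
    ∃ t ⊆ s, t.card = m ∧ ∑ i ∈ t, w i ≤ (m / s.card : K) * ∑ i ∈ s, w i := by
  obtain rfl | hm₀ := eq_or_ne m 0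
  · exact ⟨∅, by simp⟩
  have choose_eq : ((s.card - 1).choose (m - 1) : K) = s.card.choose m * (m / s.card) := by
    obtain ⟨m, rfl⟩ := Nat.exists_eq_succ_of_ne_zero hm₀
    obtain ⟨n, hn⟩ := Nat.exists_eq_succ_of_ne_zero (show s.card ≠ 0 by lia)
    rw [hn, ← mul_div_assoc, eq_div_iff (by positivity), mul_comm]
    exact_mod_cast Nat.add_one_mul_choose_eq n m
  have sum_eq : ∑ t ∈ s.powersetCard m, ∑ i ∈ t, w i
      = ∑ _t ∈ s.powersetCard m, (m / s.card : K) * ∑ i ∈ s, w i := by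
    rw [sum_powersetCard_sum hm₀, Finset.sum_const, Finset.card_powersetCard, nsmul_eq_mul,
      nsmul_eq_mul, choose_eq, mul_assoc]
  obtain ⟨t, ht, hle⟩ :=
    Finset.exists_le_of_sum_le (Finset.powersetCard_nonempty.2 hm) sum_eq.le
  obtain ⟨hts, htm⟩ := Finset.mem_powersetCard.1 ht
  exact ⟨t, hts, htm, hle⟩

end Averaging

section MinSqLength

variable {ι κ : Type*} [Fintype ι] [Fintype κ]

theorem minSqLength_le (A : Matrix ι κ ℝ) {u : κ → ℤ} (hu : u ≠ 0) :
    minSqLength A ≤ (A *ᵥ fun j => (u j : ℝ)) ⬝ᵥ (A *ᵥ fun j => (u j : ℝ)) :=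
  ciInf_le ⟨0, Set.forall_mem_range.2 fun _ => Finset.sum_nonneg fun _ _ => mul_self_nonneg _⟩
    (⟨u, hu⟩ : {u : κ → ℤ // u ≠ 0})

theorem minSqLength_submatrix_equiv {ι' : Type*} [Fintype ι'] (A : Matrix ι κ ℝ) (e : ι' ≃ ι) :
    minSqLength (A.submatrix e id) = minSqLength A :=
  iInf_congr fun u => e.sum_comp fun i =>
    (A *ᵥ fun j => (u.1 j : ℝ)) i * (A *ᵥ fun j => (u.1 j : ℝ)) i

theorem minSqLength_mul_of_transpose_mul_self_eq_one {μ : Type*} [Fintype μ] [DecidableEq μ]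
    {Φ : Matrix ι μ ℝ} (hΦ : Φᵀ * Φ = 1) (V : Matrix μ κ ℝ) :
    minSqLength (Φ * V) = minSqLength V :=
  iInf_congr fun u => by
    rw [← mulVec_mulVec, dotProduct_mulVec, ← mulVec_transpose, mulVec_mulVec, hΦ, one_mulVec]

theorem minSq_eq_minSqLength {k : ℕ} (M : Matrix (Fin k) (Fin k) ℝ) :
    minSq M = minSqLength M := by
  refine congrArg sInf (Set.ext fun t => ?_)
  simp only [sqnorm, dotProduct, sq, Set.mem_ofPred_eq, Set.mem_range, Subtype.exists, exists_prop,
    eq_comm]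

theorem minSq_rowsSub_mul {n k : ℕ} (Φ : Matrix (Fin n) (Fin k) ℝ)
    (V : Matrix (Fin k) (Fin k) ℝ) (S : {s : Finset (Fin n) // s.card = k}) :
    minSq (rowsSub Φ S * V) = minSqLength ((Φ * V).submatrix ((↑) : S.1 → Fin n) id) := by
  rw [minSq_eq_minSqLength, ← minSqLength_submatrix_equiv _ (S.1.orderIsoOfFin S.2).toEquiv]
  rfl

theorem exists_minSq_le_trace_bound_general [Nonempty κ] (A : Matrix ι κ ℝ) {m : ℕ}
    (hm : m ≤ Fintype.card ι) :
    ∃ S : Finset ι, S.card = m ∧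
      minSqLength (A.submatrix ((↑) : S → ι) id) ≤ (m / Fintype.card ι : ℝ) * minSqLength A := by
  obtain ⟨S, hS, hS_min⟩ := Finset.exists_min_image (Finset.univ.powersetCard m)
    (fun S : Finset ι => minSqLength (A.submatrix ((↑) : S → ι) id))
    (Finset.powersetCard_nonempty.2 hm)
  refine ⟨S, Finset.mem_powersetCard_univ.1 hS, ?_⟩
  have : Nonempty {u : κ → ℤ // u ≠ 0} := nonempty_subtype.2 (exists_ne 0)
  conv_rhs => rw [minSqLength, Real.mul_iInf_of_nonneg (by positivity)]
  refine le_ciInf fun u => ?_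
  set v : ι → ℝ := A *ᵥ fun j => (u.1 j : ℝ)
  obtain ⟨T, hT, hT_card, hT_le⟩ := exists_subset_card_eq_sum_le hm fun i => v i * v i
  calc minSqLength (A.submatrix ((↑) : S → ι) id)
      ≤ minSqLength (A.submatrix ((↑) : T → ι) id) :=
        hS_min T (Finset.mem_powersetCard.2 ⟨hT, hT_card⟩)
    _ ≤ ∑ i : T, v i * v i := minSqLength_le _ u.2
    _ = ∑ i ∈ T, v i * v i := Finset.sum_coe_sort T fun i => v i * v i
    _ ≤ (m / Fintype.card ι : ℝ) * (v ⬝ᵥ v) := hT_le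

end MinSqLength

/-- Minimum form of the trace bound: some `k`-subset `S` has a child lattice
`Φ_S V ℤ^k` whose squared shortest vector is at most `(k/n)` times the squared
shortest vector of the mother lattice `V ℤ^k`. -/
theorem exists_minSq_le_trace_bound (n k : ℕ) (hk : 1 ≤ k) (hkn : k ≤ n)
    (Φ : Matrix (Fin n) (Fin k) ℝ) (hΦ : Φᵀ * Φ = 1)
    (V : Matrix (Fin k) (Fin k) ℝ) (hV : IsUnit V.det) :
    ∃ S : {s : Finset (Fin n) // s.card = k},
      minSq (rowsSub Φ S * V) ≤ ((k : ℝ) / (n : ℝ)) * minSq V := by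
  have : Nonempty (Fin k) := ⟨⟨0, hk⟩⟩
  obtain ⟨S, hS, hle⟩ := exists_minSq_le_trace_bound_general (Φ * V) (m := k) (by simpa using hkn)
  rw [Fintype.card_fin, minSqLength_mul_of_transpose_mul_self_eq_one hΦ] at hle
  exact ⟨⟨S, hS⟩, by rwa [minSq_rowsSub_mul, minSq_eq_minSqLength]⟩
end

section
/- Let n ≥ k ≥ 1, let Φ be an n×k real matrix with orthonormal columns (Φᵀ Φ = I_k), and let V be an invertible k×k real matrix. Suppose there exists a nonzero u ∈ ℤ^k such that ‖V u‖² = inf{ ‖V w‖² : w ∈ ℤ^k, w ≠ 0 } and, for every k-element subset S of {1,…,n}, ‖Φ_S V u‖² = inf{ ‖Φ_S V w‖² : w ∈ ℤ^k, w ≠ 0 }. Then (1/C(n,k)) ∑_S inf{ ‖Φ_S V w‖² : w ∈ ℤ^k, w ≠ 0 } = (k/n) · inf{ ‖V w‖² : w ∈ ℤ^k, w ≠ 0 }. -/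
open Matrix

/-! For a fixed vector `u`, the average of `‖Φ_S V u‖²` over all `S` is `k` times the mean squared
coordinate of `Φ V u`, because every row lies in the same number of `k`-subsets; and `Φ` is an
isometry. A common minimiser `u` turns each `minSq` into the squared length of the image of `u`. -/

open Finset
open scoped BigOperators

section PowersetCard

variable {α M : Type*}

lemma card_filter_mem_powersetCard_succ [DecidableEq α] {s : Finset α} {a : α} (ha : a ∈ s)
    (k : ℕ) : #{t ∈ s.powersetCard (k + 1) | a ∈ t} = (#s - 1).choose k := by
  simpa using card_filter_powersetCard_subset {a} s (k + 1) (by simpa) (by simp)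

lemma sum_powersetCard_succ_sum [AddCommMonoid M] (s : Finset α) (k : ℕ) (f : α → M) :
    ∑ t ∈ s.powersetCard (k + 1), ∑ a ∈ t, f a = (#s - 1).choose k • ∑ a ∈ s, f a := by
  classical
  calc
    ∑ t ∈ s.powersetCard (k + 1), ∑ a ∈ t, f a
      = ∑ a ∈ s, ∑ t ∈ s.powersetCard (k + 1) with a ∈ t, f a :=
        sum_comm' fun t a ↦ by grind
    _ = ∑ a ∈ s, (#s - 1).choose k • f a :=
        sum_congr rfl fun a ha ↦ by rw [sum_const, card_filter_mem_powersetCard_succ ha]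
    _ = (#s - 1).choose k • ∑ a ∈ s, f a := sum_nsmul ..

lemma expect_powersetCard_sum [AddCommMonoid M] [Module ℚ≥0 M] {s : Finset α} {k : ℕ}
    (hk : k ≤ #s) (f : α → M) :
    𝔼 t ∈ s.powersetCard k, ∑ a ∈ t, f a = k • 𝔼 a ∈ s, f a := by
  obtain _ | k := k
  · simp
  obtain ⟨n, hn⟩ : ∃ n, #s = n + 1 := Nat.exists_eq_add_one.mpr (by lia)
  have hchoose : ((n + 1).choose (k + 1) : ℚ≥0) ≠ 0 := by
    exact_mod_cast (Nat.choose_pos (hn ▸ hk)).ne'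
  have absorption : (n + 1 : ℚ≥0) * n.choose k = (n + 1).choose (k + 1) * (k + 1) := by
    exact_mod_cast Nat.add_one_mul_choose_eq n k
  have hcoeff : ((n + 1).choose (k + 1) : ℚ≥0)⁻¹ * n.choose k = (k + 1) * (n + 1 : ℚ≥0)⁻¹ := by
    field_simp
    rw [mul_comm, absorption]
  simp only [expect, sum_powersetCard_succ_sum, card_powersetCard, hn, Nat.add_sub_cancel,
    ← Nat.cast_smul_eq_nsmul ℚ≥0, smul_smul, Nat.cast_add_one, hcoeff]

end PowersetCard

lemma mulVec_dotProduct_mulVec_of_transpose_mul_self_eq_one {m n R : Type*} [Fintype m]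
    [Fintype n] [DecidableEq n] [CommSemiring R] {A : Matrix m n R} (hA : Aᵀ * A = 1)
    (x y : n → R) : (A *ᵥ x) ⬝ᵥ (A *ᵥ y) = x ⬝ᵥ y := by
  rw [dotProduct_mulVec, vecMul_mulVec, hA, vecMul_one]

lemma sqnorm_eq_dotProduct {k : ℕ} (x : Fin k → ℝ) : sqnorm x = x ⬝ᵥ x := by
  simp only [sqnorm, dotProduct, sq]

section RowSubmatrices

variable {n k : ℕ}

lemma sqnorm_mulVec_of_transpose_mul_self_eq_one {Φ : Matrix (Fin n) (Fin k) ℝ}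
    (hΦ : Φᵀ * Φ = 1) (y : Fin k → ℝ) : sqnorm (Φ *ᵥ y) = sqnorm y := by
  simp only [sqnorm_eq_dotProduct, mulVec_dotProduct_mulVec_of_transpose_mul_self_eq_one hΦ]

lemma sqnorm_rowsSub_mulVec (Φ : Matrix (Fin n) (Fin k) ℝ)
    (S : {s : Finset (Fin n) // s.card = k}) (y : Fin k → ℝ) :
    sqnorm (rowsSub Φ S *ᵥ y) = ∑ i ∈ S.1, (Φ *ᵥ y) i ^ 2 := by
  rw [← sum_coe_sort S.1]
  exact (S.1.orderIsoOfFin S.2).toEquiv.sum_comp fun i : S.1 ↦ (Φ *ᵥ y) i ^ 2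

lemma expect_sqnorm_rowsSub_mulVec (hkn : k ≤ n) (Φ : Matrix (Fin n) (Fin k) ℝ)
    (y : Fin k → ℝ) :
    𝔼 S : {s : Finset (Fin n) // s.card = k}, sqnorm (rowsSub Φ S *ᵥ y) =
      k / n * sqnorm (Φ *ᵥ y) := by
  calc
    𝔼 S : {s : Finset (Fin n) // s.card = k}, sqnorm (rowsSub Φ S *ᵥ y)
      = 𝔼 s ∈ univ.powersetCard k, ∑ i ∈ s, (Φ *ᵥ y) i ^ 2 := by
        simp only [sqnorm_rowsSub_mulVec]
        exact expect_nbij Subtype.val (by simp) (by simp) (by simp) (fun s hs ↦ by simpa using hs)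
    _ = k • 𝔼 i, (Φ *ᵥ y) i ^ 2 := expect_powersetCard_sum (by simpa) _
    _ = k / n * sqnorm (Φ *ᵥ y) := by
        rw [Fintype.expect_eq_sum_div_card, Fintype.card_fin, nsmul_eq_mul, sqnorm]
        ring

end RowSubmatrices

/-- Equality condition of the trace bound: if one common nonzero integer vector `u`
realizes the shortest vector of the mother lattice `V ℤ^k` and of every child lattice
`Φ_S V ℤ^k`, then the average squared shortest child vector equals `(k/n)` times the
squared shortest vector of the mother lattice. -/
theorem avg_minSq_eq_trace_bound (n k : ℕ) (hk : 1 ≤ k) (hkn : k ≤ n)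
    (Φ : Matrix (Fin n) (Fin k) ℝ) (hΦ : Φᵀ * Φ = 1)
    (V : Matrix (Fin k) (Fin k) ℝ) (hV : IsUnit V.det)
    (hshort : ∃ u : Fin k → ℤ, u ≠ 0 ∧
      sqnorm (V.mulVec fun j => (u j : ℝ)) = minSq V ∧
      ∀ S : {s : Finset (Fin n) // s.card = k},
        sqnorm ((rowsSub Φ S * V).mulVec fun j => (u j : ℝ)) = minSq (rowsSub Φ S * V)) :
    (1 / (n.choose k : ℝ)) *
        ∑ S : {s : Finset (Fin n) // s.card = k}, minSq (rowsSub Φ S * V)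
      = ((k : ℝ) / (n : ℝ)) * minSq V := by
  obtain ⟨u, -, hu, hS⟩ := hshort
  let y : Fin k → ℝ := V *ᵥ fun j ↦ (u j : ℝ)
  have child_minSq (S : {s : Finset (Fin n) // s.card = k}) :
      minSq (rowsSub Φ S * V) = sqnorm (rowsSub Φ S *ᵥ y) := by
    rw [← hS S, ← mulVec_mulVec]
  calc
    (1 / (n.choose k : ℝ)) * ∑ S : {s : Finset (Fin n) // s.card = k}, minSq (rowsSub Φ S * V)
      = 𝔼 S : {s : Finset (Fin n) // s.card = k}, sqnorm (rowsSub Φ S *ᵥ y) := by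
        simp only [child_minSq, Fintype.expect_eq_sum_div_card, Fintype.card_finset_len,
          Fintype.card_fin, one_div_mul_eq_div]
    _ = k / n * sqnorm (Φ *ᵥ y) := expect_sqnorm_rowsSub_mulVec hkn Φ y
    _ = k / n * minSq V := by rw [sqnorm_mulVec_of_transpose_mul_self_eq_one hΦ, hu]
end

section
/- Let n ≥ k ≥ 1, let Φ be an n×k real matrix with orthonormal columns (Φᵀ Φ = I_k), and let V be an invertible k×k real matrix. Assume that for every k-element subset S of {1,…,n} the matrix Φ_S V is invertible, where Φ_S is the submatrix of rows of Φ indexed by S. Define ρ_S = (1/2)·inf{ ‖Φ_S V u‖ : u ∈ ℤ^k, u ≠ 0 } and ρ_V = (1/2)·inf{ ‖V u‖ : u ∈ ℤ^k, u ≠ 0 }; let V_k denote the Lebesgue volume of the unit Euclidean ball in ℝ^k; define the packing densities Δ_S = V_k ρ_S^k / √(det((Φ_S V)ᵀ Φ_S V)) and Δ_V = V_k ρ_V^k / √(det(Vᵀ V)), and the contraction ratios β_S = (ρ_S/ρ_V)^k. Let N = C(n,k), and let β^# = (∏_S β_S)^{1/N} and Δ^# = (∏_S Δ_S)^{1/N}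 be the geometric means over all k-element subsets S of {1,…,n}. Then (β^# · Δ_V)² ≤ (Δ^#)² / N. -/
open Matrix

/-- Packing radius of the lattice `M ℤ^k`: half the length of its shortest
nonzero vector. -/
noncomputable def packRad {k : ℕ} (M : Matrix (Fin k) (Fin k) ℝ) : ℝ :=
  (1 / 2) * sInf {t : ℝ | ∃ u : Fin k → ℤ, u ≠ 0 ∧
    t = Real.sqrt (sqnorm (M.mulVec fun j => (u j : ℝ)))}

/-- Lebesgue volume of the unit Euclidean ball in `ℝ^k`. -/
noncomputable def unitBallVol (k : ℕ) : ℝ :=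
  (MeasureTheory.volume (Metric.ball (0 : EuclideanSpace ℝ (Fin k)) 1)).toReal

/-- Packing density of the lattice `M ℤ^k`: `V_k ρ^k / √(det (Mᵀ M))`. -/
noncomputable def packDensity {k : ℕ} (M : Matrix (Fin k) (Fin k) ℝ) : ℝ :=
  unitBallVol k * packRad M ^ k / Real.sqrt ((Mᵀ * M).det)

/-!
The map `Φ_S` multiplies the covolume of `Vℤ^k` by `|det Φ_S|`, so `β_S Δ_V = |det Φ_S| Δ_S`.
Taking geometric means over `S` leaves the geometric mean of the `(det Φ_S)²` to be bounded.
By AM–GM it is at most their arithmetic mean, and by Cauchy–Binet they add up to `det (Φᵀ Φ)`,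
which is `1` when the columns of `Φ` are orthonormal.
-/

section GeometricMean

variable {ι : Type*} [Fintype ι] {f g : ι → ℝ}

/-- The geometric mean of a finite family of nonnegative reals, written `β^#`, `Δ^#` in the paper.
As `1 / 0 = 0`, the empty family has geometric mean `1`. -/
noncomputable def geomMean (f : ι → ℝ) : ℝ := (∏ i, f i) ^ ((1 : ℝ) / Fintype.card ι)

lemma geomMean_mul (hf : ∀ i, 0 ≤ f i) (hg : ∀ i, 0 ≤ g i) :
    geomMean (fun i ↦ f i * g i) = geomMean f * geomMean g := by
  rw [geomMean, Finset.prod_mul_distrib, Real.mul_rpow (Finset.prod_nonneg fun i _ ↦ hf i)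
    (Finset.prod_nonneg fun i _ ↦ hg i), geomMean, geomMean]

lemma geomMean_const [Nonempty ι] {c : ℝ} (hc : 0 ≤ c) : geomMean (fun _ : ι ↦ c) = c := by
  rw [geomMean, Finset.prod_const, Finset.card_univ, one_div,
    Real.pow_rpow_inv_natCast hc Fintype.card_ne_zero]

lemma geomMean_le_arith_mean [Nonempty ι] (hf : ∀ i, 0 ≤ f i) :
    geomMean f ≤ (∑ i, f i) / Fintype.card ι := by
  have amgm := Real.geom_mean_le_arith_mean Finset.univ (fun _ : ι ↦ 1) f
    (fun _ _ ↦ zero_le_one) (by simp [Fintype.card_pos]) (fun i _ ↦ hf i)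
  simpa [geomMean] using amgm

lemma sq_geomMean_abs_le [Nonempty ι] (x : ι → ℝ) :
    geomMean (fun i ↦ |x i|) ^ 2 ≤ (∑ i, x i ^ 2) / Fintype.card ι := by
  calc geomMean (fun i ↦ |x i|) ^ 2 = geomMean (fun i ↦ |x i| * |x i|) := by
        rw [sq, geomMean_mul] <;> exact fun i ↦ abs_nonneg (x i)
    _ = geomMean (fun i ↦ x i ^ 2) := by simp only [abs_mul_abs_self, sq]
    _ ≤ (∑ i, x i ^ 2) / Fintype.card ι := geomMean_le_arith_mean fun i ↦ sq_nonneg (x i)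

end GeometricMean

/- Expand the wedge of the columns of `B` in the standard basis of `⋀^k R^ι`: its coordinates are
the maximal minors of `B`, and the linear extension of `v₁ ∧ ⋯ ∧ v_k ↦ det (A v₁, …, A v_k)` takes
the basis vectors to the maximal minors of `A`. -/
open exteriorPower in
theorem cauchy_binet_s15 {R ι : Type*} [CommRing R] [Fintype ι] [LinearOrder ι] {k : ℕ}
    (A : Matrix (Fin k) ι R) (B : Matrix ι (Fin k) R) :
    (A * B).det = ∑ S : Set.powersetCard ι k,
      (A.submatrix id (S.1.orderEmbOfFin S.2)).det *
        (B.submatrix (S.1.orderEmbOfFin S.2) id).det := by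
  let e := (Pi.basisFun R ι).exteriorPower k
  let columnWedge := ιMulti R k B.col
  let detA := alternatingMapLinearEquiv (detRowAlternating.compLinearMap A.mulVecLin)
  have detA_columnWedge : detA columnWedge = (A * B).det := by
    rw [← det_transpose, alternatingMapLinearEquiv_apply_ιMulti]
    rfl
  have detA_basis (S : Set.powersetCard ι k) :
      detA (e S) = (A.submatrix id (S.1.orderEmbOfFin S.2)).det := by
    rw [← det_transpose, basis_apply, ιMulti_family, alternatingMapLinearEquiv_apply_ιMulti]
    refine congrArg det (Matrix.ext fun i j ↦ ?_)
    simp [Set.powersetCard.ofFinEmbEquiv_symm_apply]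
  have repr_columnWedge (S : Set.powersetCard ι k) :
      e.repr columnWedge S = (B.submatrix (S.1.orderEmbOfFin S.2) id).det := by
    rw [← det_transpose, basis_repr_apply, ιMultiDual_apply_ιMulti]
    rfl
  rw [← detA_columnWedge, ← e.sum_repr columnWedge, map_sum]
  refine Finset.sum_congr rfl fun S _ ↦ ?_
  rw [map_smul, smul_eq_mul, detA_basis, repr_columnWedge, mul_comm]

lemma sum_sq_det_rowsSub {n k : ℕ} (Φ : Matrix (Fin n) (Fin k) ℝ) :
    ∑ S : {s : Finset (Fin n) // s.card = k}, (rowsSub Φ S).det ^ 2 = (Φᵀ * Φ).det := by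
  calc ∑ S : {s : Finset (Fin n) // s.card = k}, (rowsSub Φ S).det ^ 2
      = ∑ S : Set.powersetCard (Fin n) k, (Φ.submatrix (S.1.orderEmbOfFin S.2) id).det ^ 2 :=
        -- The two index types are equal by definition, but their `Fintype` instances are not.
        Fintype.sum_equiv (ι := {s : Finset (Fin n) // s.card = k})
          (κ := Set.powersetCard (Fin n) k) (Equiv.refl _) _ _ fun _ ↦ rfl
    _ = (Φᵀ * Φ).det := by
        simp only [cauchy_binet_s15, ← transpose_submatrix, det_transpose, ← sq]

section PackingDensity

variable {k : ℕ}

lemma norm_le_sqrt_sqnorm (x : Fin k → ℝ) : ‖x‖ ≤ √(sqnorm x) := by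
  refine (pi_norm_le_iff_of_nonneg (Real.sqrt_nonneg _)).2 fun i ↦ Real.abs_le_sqrt ?_
  exact Finset.single_le_sum (f := fun i ↦ x i ^ 2) (fun i _ ↦ sq_nonneg _) (Finset.mem_univ i)

lemma one_le_norm_intCast {u : Fin k → ℤ} (hu : u ≠ 0) : 1 ≤ ‖fun j ↦ (u j : ℝ)‖ := by
  obtain ⟨j, hj⟩ := Function.ne_iff.1 hu
  calc (1 : ℝ) ≤ |(u j : ℝ)| := mod_cast Int.one_le_abs hj
    _ ≤ ‖fun j ↦ (u j : ℝ)‖ := norm_le_pi_norm (fun j ↦ (u j : ℝ)) j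

lemma packRad_nonneg (M : Matrix (Fin k) (Fin k) ℝ) : 0 ≤ packRad M := by
  refine mul_nonneg one_half_pos.le (Real.sInf_nonneg ?_)
  rintro _ ⟨u, -, rfl⟩
  exact Real.sqrt_nonneg _

lemma packRad_pos (hk : 1 ≤ k) {M : Matrix (Fin k) (Fin k) ℝ} (hM : M.det ≠ 0) :
    0 < packRad M := by
  obtain ⟨K, hK, hMK⟩ := M.mulVecLin.exists_antilipschitzWith
    (LinearMap.ker_eq_bot.2 (mulVec_injective_iff_isUnit.2 ((isUnit_iff_isUnit_det M).2 hM.isUnit)))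
  have inv_le_length {u : Fin k → ℤ} (hu : u ≠ 0) :
      (K : ℝ)⁻¹ ≤ √(sqnorm (M *ᵥ fun j ↦ (u j : ℝ))) := by
    rw [inv_le_iff_one_le_mul₀' (NNReal.coe_pos.2 hK)]
    calc (1 : ℝ) ≤ ‖fun j ↦ (u j : ℝ)‖ := one_le_norm_intCast hu
      _ ≤ K * ‖M *ᵥ fun j ↦ (u j : ℝ)‖ := hMK.le_mul_norm (map_zero _) _
      _ ≤ K * √(sqnorm (M *ᵥ fun j ↦ (u j : ℝ))) := by gcongr; exact norm_le_sqrt_sqnorm _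
  have : Nonempty (Fin k) := ⟨⟨0, hk⟩⟩
  refine mul_pos one_half_pos ((inv_pos.2 (NNReal.coe_pos.2 hK)).trans_le (le_csInf ?_ ?_))
  · exact ⟨_, 1, one_ne_zero, rfl⟩
  · rintro _ ⟨u, hu, rfl⟩
    exact inv_le_length hu

lemma packDensity_nonneg (M : Matrix (Fin k) (Fin k) ℝ) : 0 ≤ packDensity M :=
  div_nonneg (mul_nonneg ENNReal.toReal_nonneg (pow_nonneg (packRad_nonneg M) k))
    (Real.sqrt_nonneg _)

lemma packDensity_eq_div_abs_det (M : Matrix (Fin k) (Fin k) ℝ) :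
    packDensity M = unitBallVol k * packRad M ^ k / |M.det| := by
  rw [packDensity, det_mul, det_transpose, Real.sqrt_mul_self_eq_abs]

lemma packRad_div_pow_mul_packDensity (hk : 1 ≤ k) {M V : Matrix (Fin k) (Fin k) ℝ}
    (hMV : (M * V).det ≠ 0) :
    (packRad (M * V) / packRad V) ^ k * packDensity V = |M.det| * packDensity (M * V) := by
  rw [det_mul, mul_ne_zero_iff] at hMV
  have hρ : packRad V ≠ 0 := (packRad_pos hk hMV.2).ne'
  have hM : |M.det| ≠ 0 := abs_ne_zero.2 hMV.1
  rw [packDensity_eq_div_abs_det, packDensity_eq_div_abs_det, det_mul, abs_mul, div_pow]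
  field_simp

end PackingDensity

theorem determinant_bound_general (n k : ℕ) (hk : 1 ≤ k) (hkn : k ≤ n)
    (Φ : Matrix (Fin n) (Fin k) ℝ) (V : Matrix (Fin k) (Fin k) ℝ)
    (hSV : ∀ S : {s : Finset (Fin n) // s.card = k}, IsUnit (rowsSub Φ S * V).det) :
    (geomMean (fun S : {s : Finset (Fin n) // s.card = k} ↦
          (packRad (rowsSub Φ S * V) / packRad V) ^ k) * packDensity V) ^ 2
      ≤ (Φᵀ * Φ).det * (geomMean (fun S : {s : Finset (Fin n) // s.card = k} ↦
          packDensity (rowsSub Φ S * V)) ^ 2 / n.choose k) := by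
  have card_eq : Fintype.card {s : Finset (Fin n) // s.card = k} = n.choose k := by simp
  have : Nonempty {s : Finset (Fin n) // s.card = k} :=
    Fintype.card_pos_iff.1 (card_eq ▸ Nat.choose_pos hkn)
  have geomMean_density :
      geomMean (fun S ↦ (packRad (rowsSub Φ S * V) / packRad V) ^ k) * packDensity V =
        geomMean (fun S ↦ |(rowsSub Φ S).det|) *
          geomMean (fun S ↦ packDensity (rowsSub Φ S * V)) := by
    rw [← geomMean_mul (fun _ ↦ abs_nonneg _) fun _ ↦ packDensity_nonneg _]
    simp only [← packRad_div_pow_mul_packDensity hk (hSV _).ne_zero]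
    rw [geomMean_mul
      (fun _ ↦ pow_nonneg (div_nonneg (packRad_nonneg _) (packRad_nonneg _)) k)
      fun _ ↦ packDensity_nonneg V, geomMean_const (packDensity_nonneg V)]
  have sq_geomMean_det :
      geomMean (fun S ↦ |(rowsSub Φ S).det|) ^ 2 ≤ (Φᵀ * Φ).det / n.choose k := by
    simpa only [sum_sq_det_rowsSub, card_eq] using sq_geomMean_abs_le fun S ↦ (rowsSub Φ S).det
  calc (geomMean (fun S ↦ (packRad (rowsSub Φ S * V) / packRad V) ^ k) * packDensity V) ^ 2
      = geomMean (fun S ↦ |(rowsSub Φ S).det|) ^ 2 *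
          geomMean (fun S ↦ packDensity (rowsSub Φ S * V)) ^ 2 := by rw [geomMean_density, mul_pow]
    _ ≤ (Φᵀ * Φ).det / n.choose k * geomMean (fun S ↦ packDensity (rowsSub Φ S * V)) ^ 2 := by
        gcongr
    _ = (Φᵀ * Φ).det * (geomMean (fun S ↦ packDensity (rowsSub Φ S * V)) ^ 2 / n.choose k) := by
        ring

/-- The paper's Determinant Bound (Theorem 1): with `β^#` and `Δ^#` the geometric
means over all `k`-subsets `S` of the contraction ratios `β_S = (ρ_S/ρ_V)^k` and of
the packing densities `Δ_S` of the child lattices `Φ_S V ℤ^k`, one has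
`(β^# Δ_V)² ≤ (Δ^#)² / C(n,k)`. -/
theorem determinant_bound (n k : ℕ) (hk : 1 ≤ k) (hkn : k ≤ n)
    (Φ : Matrix (Fin n) (Fin k) ℝ) (hΦ : Φᵀ * Φ = 1)
    (V : Matrix (Fin k) (Fin k) ℝ) (hV : IsUnit V.det)
    (hSV : ∀ S : {s : Finset (Fin n) // s.card = k}, IsUnit (rowsSub Φ S * V).det) :
    ((∏ S : {s : Finset (Fin n) // s.card = k},
          (packRad (rowsSub Φ S * V) / packRad V) ^ k) ^ ((1 : ℝ) / (n.choose k : ℝ))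
        * packDensity V) ^ 2
      ≤ ((∏ S : {s : Finset (Fin n) // s.card = k},
          packDensity (rowsSub Φ S * V)) ^ ((1 : ℝ) / (n.choose k : ℝ))) ^ 2
        / (n.choose k : ℝ) := by
  simpa [geomMean, hΦ] using determinant_bound_general n k hk hkn Φ V hSV
end
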